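/- Let (λ_j)_{j≥1} be a sequence of positive real numbers, let C > 0 and β > α > 0. Then there exists c₁ > 0 such that |λ_j^{-1} − C j^{−α}| ≤ c₁ j^{−β} for all j ≥ 1, if and only if there exists c₅ > 0 such that |λ_j − C^{-1} j^{α}| ≤ c₅ j^{2α−β} for all j ≥ 1. -/

import Mathlib

theorem inv_asymp_aux (μ : ℕ → ℝ) (hpos : ∀ j : ℕ, 1 ≤ j → 0 < μ j)
    (D a b : ℝ) (hD : 0 < D) (hab : a < b) (c : ℝ) (hc : 0 < c)
    (h : ∀ j : ℕ, 1 ≤ j → |μ j - D * (j : ℝ) ^ (-a)| ≤ c * (j : ℝ) ^ (-b)) :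
    ∃ c' > (0 : ℝ), ∀ j : ℕ, 1 ≤ j →
      |(μ j)⁻¹ - D⁻¹ * (j : ℝ) ^ a| ≤ c' * (j : ℝ) ^ (2 * a - b) := by
  have ht : Filter.Tendsto (fun j : ℕ => c * (j : ℝ) ^ (-(b - a))) Filter.atTop (nhds (c * 0)) :=
    ((tendsto_rpow_neg_atTop (sub_pos.2 hab)).comp tendsto_natCast_atTop_atTop).const_mul c
  rw [mul_zero] at ht
  have hev := ht.eventually (gt_mem_nhds (half_pos hD))
  obtain ⟨N, hN⟩ := Filter.eventually_atTop.1 hev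
  set f : ℕ → ℝ := fun j => |(μ j)⁻¹ - D⁻¹ * (j : ℝ) ^ a| / (j : ℝ) ^ (2 * a - b) with hf
  have hf0 : ∀ j, 0 ≤ f j := fun j => by positivity
  have hS : 0 ≤ ∑ j ∈ Finset.range N, f j := Finset.sum_nonneg fun j _ => hf0 j
  have hK : 0 < 2 * c / D ^ 2 := by positivity
  refine ⟨2 * c / D ^ 2 + ∑ j ∈ Finset.range N, f j, by linarith, fun j hj => ?_⟩
  have hj0 : (0 : ℝ) < j := by exact_mod_cast hj
  have hp : 0 < (j : ℝ) ^ (2 * a - b) := Real.rpow_pos_of_pos hj0 _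
  rw [← div_le_iff₀ hp]
  change f j ≤ _
  by_cases hjN : j < N
  · have := Finset.single_le_sum (f := f) (fun i _ => hf0 i) (Finset.mem_range.2 hjN)
    linarith
  · suffices f j ≤ 2 * c / D ^ 2 by linarith
    have h1 := hN j (not_lt.1 hjN)
    have h2 := h j hj
    have hm := hpos j hj
    set x := (j : ℝ) ^ a with hx
    have hx0 : 0 < x := Real.rpow_pos_of_pos hj0 _
    set y := (j : ℝ) ^ (-b) with hy
    have hy0 : 0 < y := Real.rpow_pos_of_pos hj0 _
    have e1 : (j : ℝ) ^ (-a) = x⁻¹ := Real.rpow_neg hj0.le a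
    have e2 : (j : ℝ) ^ (2 * a - b) = x * x * y := by
      rw [hx, hy, ← Real.rpow_add hj0, ← Real.rpow_add hj0]; congr 1; ring
    have e3 : (j : ℝ) ^ (-(b - a)) = x * y := by
      rw [hx, hy, ← Real.rpow_add hj0]; congr 1; ring
    rw [e3] at h1
    rw [e1] at h2
    have hlow : D / 2 * x⁻¹ ≤ μ j := by
      have h3 := (abs_le.1 h2).1
      have h4 : c * y ≤ D / 2 * x⁻¹ := by
        rw [← div_eq_mul_inv, le_div_iff₀ hx0]; nlinarith
      linarith
    have hinv : (μ j)⁻¹ ≤ 2 / D * x := by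
      have := inv_anti₀ (by positivity) hlow
      calc _ ≤ _ := this
        _ = _ := by field_simp
    have e4 : (μ j)⁻¹ - D⁻¹ * x = -((μ j - D * x⁻¹) * ((μ j)⁻¹ * (D⁻¹ * x))) := by
      field_simp; ring
    rw [hf]
    simp only
    rw [e2, div_le_iff₀ (by positivity), e4, abs_neg, abs_mul,
      abs_of_pos (show 0 < (μ j)⁻¹ * (D⁻¹ * x) by positivity)]
    calc _ ≤ (c * y) * ((2 / D * x) * (D⁻¹ * x)) := by gcongr
      _ = _ := by field_simp

/-- For a sequence `λ_j` of positive reals, `C > 0` and `β > α > 0`: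
there is `c₁ > 0` with `|λ_j⁻¹ - C j^{-α}| ≤ c₁ j^{-β}` for all `j ≥ 1` iff there is
`c₅ > 0` with `|λ_j - C⁻¹ j^{α}| ≤ c₅ j^{2α-β}` for all `j ≥ 1`. -/
theorem inverse_eigenvalue_asymptotics_equiv
    (lam : ℕ → ℝ)
    (hpos : ∀ j : ℕ, 1 ≤ j → 0 < lam j)
    (C α β : ℝ) (hC : 0 < C) (hα : 0 < α) (hβ : α < β) :
    (∃ c₁ > (0 : ℝ), ∀ j : ℕ, 1 ≤ j →
        |(lam j)⁻¹ - C * (j : ℝ) ^ (-α)| ≤ c₁ * (j : ℝ) ^ (-β))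
    ↔ (∃ c₅ > (0 : ℝ), ∀ j : ℕ, 1 ≤ j →
        |lam j - C⁻¹ * (j : ℝ) ^ α| ≤ c₅ * (j : ℝ) ^ (2 * α - β)) := by

  constructor
  · rintro ⟨c, hc, h⟩
    obtain ⟨c', hc', h'⟩ := inv_asymp_aux (fun j => (lam j)⁻¹)
      (fun j hj => inv_pos.2 (hpos j hj)) C α β hC hβ c hc h
    exact ⟨c', hc', fun j hj => by simpa using h' j hj⟩
  · rintro ⟨c, hc, h⟩
    obtain ⟨c', hc', h'⟩ := inv_asymp_aux lam hpos C⁻¹ (-α) (β - 2 * α) (inv_pos.2 hC)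
      (by linarith) c hc (fun j hj => by simpa using h j hj)
    refine ⟨c', hc', fun j hj => ?_⟩
    have := h' j hj
    rwa [inv_inv, show 2 * -α - (β - 2 * α) = -β by ring] at this
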